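/- Precision guarantee for single-program cost bounds: let a transition system with states S, total successor relation step, terminal set Term (terminal states only step to themselves), initial set Init, and cost valuation c : S → ℤ be terminating, let φ be a potential function and χ an anti-potential function for it, and let p ∈ ℝ satisfy φ(s) − χ(s) ≤ p for every initial state s ∈ Init. Then for every initial state s and every run ρ from s: 0 ≤ Cost(ρ) − χ(s) ≤ p and 0 ≤ φ(s) − Cost(ρ) ≤ p; that is, p bounds the precision of the upper cost bound φ and of the lower cost bound χ. -/

import Mathlib

/-- A run of the transition system from state `s`. -/
def IsRun {S : Type*} (step : S → S → Prop) (s : S) (ρ : ℕ → S) : Prop :=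
  ρ 0 = s ∧ ∀ n, step (ρ n) (ρ (n + 1))

/-- `s'` is reachable from `s`. -/
def ReachableFrom {S : Type*} (step : S → S → Prop) (s s' : S) : Prop :=
  ∃ ρ n, IsRun step s ρ ∧ ρ n = s'

/-- `s'` is reachable from some initial state in `Init`. -/
def Reachable {S : Type*} (step : S → S → Prop) (Init : Set S) (s' : S) : Prop :=
  ∃ s ∈ Init, ReachableFrom step s s'

/-- The system is terminating: every run from a reachable state visits a terminal state. -/
def Terminating {S : Type*} (step : S → S → Prop) (Term Init : Set S) : Prop :=
  ∀ s, Reachable step Init s → ∀ ρ, IsRun step s ρ → ∃ n, ρ n ∈ Term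

/-- The cost of a run: `c (ρ N) - c (ρ 0)` where `N` is the least index with `ρ N ∈ Term`. -/
noncomputable def RunCost {S : Type*} (Term : Set S) (c : S → ℤ) (ρ : ℕ → S) : ℤ :=
  c (ρ (sInf {n | ρ n ∈ Term})) - c (ρ 0)

/-- Potential function: sufficiency preservation and sufficiency on termination. -/
def IsPF {S : Type*} (step : S → S → Prop) (Term Init : Set S) (c : S → ℤ)
    (φ : S → ℝ) : Prop :=
  (∀ s s', Reachable step Init s → step s s' →
    φ s ≥ φ s' + ((c s' : ℝ) - (c s : ℝ))) ∧
  (∀ s, Reachable step Init s → s ∈ Term → φ s ≥ 0)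

/-- Anti-potential function: insufficiency preservation and insufficiency on termination. -/
def IsAntiPF {S : Type*} (step : S → S → Prop) (Term Init : Set S) (c : S → ℤ)
    (χ : S → ℝ) : Prop :=
  (∀ s s', Reachable step Init s → step s s' →
    χ s ≤ χ s' + ((c s' : ℝ) - (c s : ℝ))) ∧
  (∀ s, Reachable step Init s → s ∈ Term → χ s ≤ 0)

section

variable {S : Type*} {step : S → S → Prop} {Term Init : Set S} {c : S → ℤ} {φ χ : S → ℝ}
  {s : S} {ρ : ℕ → S}

theorem IsRun.reachable_of_mem_init (hρ : IsRun step s ρ) (hs : s ∈ Init) :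
    Reachable step Init s :=
  ⟨s, hs, ρ, 0, hρ, hρ.1⟩

theorem IsRun.splice {s₀ : S} {ρ₀ : ℕ → S} {k : ℕ} (hρ₀ : IsRun step s₀ ρ₀)
    (hρ : IsRun step (ρ₀ k) ρ) :
    IsRun step s₀ fun m => if m < k then ρ₀ m else ρ (m - k) := by
  refine ⟨?_, fun m => ?_⟩
  · rcases k.eq_zero_or_pos with rfl | hk
    · simpa using hρ.1.trans hρ₀.1
    · simpa [hk] using hρ₀.1
  · rcases lt_trichotomy (m + 1) k with before | rfl | after
    · simpa [before, m.lt_succ_self.trans before] using hρ₀.2 m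
    · simpa [hρ.1] using hρ₀.2 m
    · have hm : k ≤ m := Nat.lt_succ_iff.mp after
      simpa [hm.not_gt, after.not_gt, Nat.sub_add_comm hm] using hρ.2 (m - k)

theorem IsRun.reachable (hρ : IsRun step s ρ) (hs : Reachable step Init s) (n : ℕ) :
    Reachable step Init (ρ n) := by
  obtain ⟨s₀, hs₀, ρ₀, k, hρ₀, rfl⟩ := hs
  exact ⟨s₀, hs₀, _, k + n, hρ₀.splice hρ, by simp⟩

theorem IsPF.antitone_add_cost (hφ : IsPF step Term Init c φ) (hs : Reachable step Init s)
    (hρ : IsRun step s ρ) : Antitone fun n => φ (ρ n) + c (ρ n) := by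
  refine antitone_nat_of_succ_le fun n => ?_
  linarith [hφ.1 _ _ (hρ.reachable hs n) (hρ.2 n)]

theorem IsPF.runCost_le (hφ : IsPF step Term Init c φ) (hs : Reachable step Init s)
    (hρ : IsRun step s ρ) (hT : ∃ n, ρ n ∈ Term) : (RunCost Term c ρ : ℝ) ≤ φ s := by
  obtain rfl : ρ 0 = s := hρ.1
  set N := sInf {n | ρ n ∈ Term}
  have terminal : ρ N ∈ Term := Nat.sInf_mem hT
  have nonneg : 0 ≤ φ (ρ N) := hφ.2 _ (hρ.reachable hs N) terminal
  have decrease : φ (ρ N) + c (ρ N) ≤ φ (ρ 0) + c (ρ 0) :=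
    hφ.antitone_add_cost hs hρ N.zero_le
  calc (RunCost Term c ρ : ℝ) = c (ρ N) - c (ρ 0) := Int.cast_sub _ _
    _ ≤ φ (ρ 0) := by linarith

theorem isPF_neg_iff : IsPF step Term Init (-c) (-χ) ↔ IsAntiPF step Term Init c χ := by
  refine and_congr (forall₄_congr fun s s' _ _ => ?_) (forall₃_congr fun s _ _ => ?_)
  · simp only [Pi.neg_apply, Int.cast_neg]
    constructor <;> intro h <;> linarith
  · exact neg_nonneg

theorem runCost_neg : RunCost Term (-c) ρ = -RunCost Term c ρ := by
  simp only [RunCost, Pi.neg_apply, neg_sub_neg, neg_sub]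

theorem IsAntiPF.le_runCost (hχ : IsAntiPF step Term Init c χ) (hs : Reachable step Init s)
    (hρ : IsRun step s ρ) (hT : ∃ n, ρ n ∈ Term) : χ s ≤ (RunCost Term c ρ : ℝ) := by
  simpa [runCost_neg] using (isPF_neg_iff.mpr hχ).runCost_le hs hρ hT

theorem pf_antipf_precision_guarantee_general
    (hφ : IsPF step Term Init c φ) (hχ : IsAntiPF step Term Init c χ)
    {p : ℝ} (hs : Reachable step Init s) (hp : φ s - χ s ≤ p)
    (hρ : IsRun step s ρ) (hT : ∃ n, ρ n ∈ Term) :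
    (0 ≤ (RunCost Term c ρ : ℝ) - χ s ∧ (RunCost Term c ρ : ℝ) - χ s ≤ p) ∧
    (0 ≤ φ s - (RunCost Term c ρ : ℝ) ∧ φ s - (RunCost Term c ρ : ℝ) ≤ p) := by
  have upper : (RunCost Term c ρ : ℝ) ≤ φ s := hφ.runCost_le hs hρ hT
  have lower : χ s ≤ (RunCost Term c ρ : ℝ) := hχ.le_runCost hs hρ hT
  exact ⟨⟨sub_nonneg.mpr lower, (sub_le_sub_right upper _).trans hp⟩,
    sub_nonneg.mpr upper, (sub_le_sub_left lower _).trans hp⟩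

end

/-- precision guarantee for single-program cost bounds. -/
theorem pf_antipf_precision_guarantee {S : Type*}
    (step : S → S → Prop) (Term Init : Set S) (c : S → ℤ)
    (htotal : ∀ s : S, ∃ s', step s s')
    (hTerm : ∀ s ∈ Term, ∀ s', step s s' → s' = s)
    (hterminating : Terminating step Term Init)
    (φ : S → ℝ) (hφ : IsPF step Term Init c φ)
    (χ : S → ℝ) (hχ : IsAntiPF step Term Init c χ)
    (p : ℝ) (hp : ∀ s ∈ Init, φ s - χ s ≤ p)
    (s : S) (hs : s ∈ Init)
    (ρ : ℕ → S) (hρ : IsRun step s ρ) :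
    (0 ≤ (RunCost Term c ρ : ℝ) - χ s ∧ (RunCost Term c ρ : ℝ) - χ s ≤ p) ∧
    (0 ≤ φ s - (RunCost Term c ρ : ℝ) ∧ φ s - (RunCost Term c ρ : ℝ) ≤ p) := by
  have hreach : Reachable step Init s := hρ.reachable_of_mem_init hs
  exact pf_antipf_precision_guarantee_general hφ hχ hreach (hp s hs) hρ
    (hterminating s hreach ρ hρ)
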